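/- For the 3×n grid graph G_{3,n} = P_3 □ P_n with n ≥ 4, srd(G_{3,n}) = 3. -/

import Mathlib

open SimpleGraph

/-- `F` is an edge-cut of `G` separating `u` and `v`. -/
def CutsBetween {V : Type*} (G : SimpleGraph V) (u v : V) (F : Finset (Sym2 V)) : Prop :=
  ↑F ⊆ G.edgeSet ∧ ¬ (G.deleteEdges ↑F).Reachable u v

/-- `lam G u v` is the minimum number of edges in an edge-cut of `G` separating `u` and `v`. -/
noncomputable def lam {V : Type*} (G : SimpleGraph V) (u v : V) : ℕ :=
  sInf {n | ∃ F : Finset (Sym2 V), CutsBetween G u v F ∧ F.card = n}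

/-- `c` is a strong rainbow disconnection coloring of `G`: every pair of distinct vertices
admits a rainbow minimum edge-cut separating them. -/
def IsSRDColoring {V : Type*} (G : SimpleGraph V) (c : Sym2 V → ℕ) : Prop :=
  ∀ u v : V, u ≠ v → ∃ F : Finset (Sym2 V),
    CutsBetween G u v F ∧ F.card = lam G u v ∧ Set.InjOn c ↑F

/-- The strong rainbow disconnection number of `G`. -/
noncomputable def srd {V : Type*} (G : SimpleGraph V) : ℕ :=
  sInf {k | ∃ c : Sym2 V → ℕ, (∀ e ∈ G.edgeSet, c e < k) ∧ IsSRDColoring G c}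

/-!
Among edge-disjoint subgraphs, a set of fewer edges than there are subgraphs misses one of them.
Applied to the rows, to the columns, and to the edges at a vertex `u`, each prolonged by the row
or column it leads to, this joins `u` to a common hub after deleting fewer than `min 3 n (deg u)`
edges. Hence if `u` lies in an outer row and `deg u ≤ deg v`, the edges at `u` form a minimum cut
separating `u` from `v`. Two vertices of the middle row stay connected when at most two edges are
deleted, since adjacent ones are joined by their edge and by detours through the two outer rows;
so the three edges between two consecutive columns form a minimum cut, and three colors are
necessary. It remains to color the edges with three colors so that all these cuts are rainbow.
-/

section EdgeDisjoint

variable {V ι : Type*} {G : SimpleGraph V}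

lemma exists_le_deleteEdges_of_encard_lt {K : ι → SimpleGraph V} (hle : ∀ i, K i ≤ G)
    (hdisj : Pairwise fun i j => Disjoint (K i) (K j)) {s : Set (Sym2 V)}
    (hs : s.encard < ENat.card ι) : ∃ i, K i ≤ G.deleteEdges s := by
  by_contra! h
  have hmeet : ∀ i, ∃ e ∈ s, e ∈ (K i).edgeSet := by
    intro i
    contrapose! h
    refine ⟨i, fun x y hxy => deleteEdges_adj.2 ⟨hle i hxy, fun hmem => h _ hmem hxy⟩⟩
  choose f hfs hfK using hmeet
  refine hs.not_ge (ENat.card_le_card_of_injective (f := fun i => (⟨f i, hfs i⟩ : s)) ?_)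
  intro i j hij
  by_contra hne
  exact Set.disjoint_left.1 (disjoint_edgeSet.2 (hdisj hne)) (hfK i)
    ((Subtype.mk.inj hij) ▸ hfK j)

lemma reachable_of_edge_le {x y : V} (h : edge x y ≤ G) : G.Reachable x y := by
  obtain rfl | hadj := (edge_le_iff G).1 h
  · rfl
  · exact hadj.reachable

end EdgeDisjoint

section BoxProd

variable {α β : Type*} {G : SimpleGraph α} {H : SimpleGraph β}

/-- The `G`-layer of a Cartesian product at `b`: the copy of `G` on `α × {b}`, regarded as a graph
on `α × β` so that it can be compared with subgraphs of `G □ H`. -/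
def leftLayer (G : SimpleGraph α) (b : β) : SimpleGraph (α × β) where
  Adj x y := G.Adj x.1 y.1 ∧ x.2 = b ∧ y.2 = b
  symm := ⟨fun _ _ h => ⟨h.1.symm, h.2.2, h.2.1⟩⟩
  loopless := ⟨fun _ h => h.1.ne rfl⟩

/-- The `H`-layer of a Cartesian product at `a`: the copy of `H` on `{a} × β`, regarded as a graph
on `α × β` so that it can be compared with subgraphs of `G □ H`. -/
def rightLayer (H : SimpleGraph β) (a : α) : SimpleGraph (α × β) where
  Adj x y := H.Adj x.2 y.2 ∧ x.1 = a ∧ y.1 = a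
  symm := ⟨fun _ _ h => ⟨h.1.symm, h.2.2, h.2.1⟩⟩
  loopless := ⟨fun _ h => h.1.ne rfl⟩

lemma leftLayer_adj {b : β} {x y : α × β} :
    (leftLayer G b).Adj x y ↔ G.Adj x.1 y.1 ∧ x.2 = b ∧ y.2 = b := Iff.rfl

lemma rightLayer_adj {a : α} {x y : α × β} :
    (rightLayer H a).Adj x y ↔ H.Adj x.2 y.2 ∧ x.1 = a ∧ y.1 = a := Iff.rfl

lemma leftLayer_le_boxProd (b : β) : leftLayer G b ≤ G □ H := by
  rintro x y ⟨hxy, hx, hy⟩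
  exact Or.inl ⟨hxy, hx.trans hy.symm⟩

lemma rightLayer_le_boxProd (a : α) : rightLayer H a ≤ G □ H := by
  rintro x y ⟨hxy, hx, hy⟩
  exact Or.inr ⟨hxy, hx.trans hy.symm⟩

lemma reachable_leftLayer (hG : G.Preconnected) (a a' : α) (b : β) :
    (leftLayer G b).Reachable (a, b) (a', b) :=
  (hG a a').map (⟨fun a => (a, b), fun h => ⟨h, rfl, rfl⟩⟩ : G →g leftLayer G b)

lemma reachable_rightLayer (hH : H.Preconnected) (a : α) (b b' : β) :
    (rightLayer H a).Reachable (a, b) (a, b') :=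
  (hH b b').map (⟨fun b => (a, b), fun h => ⟨h, rfl, rfl⟩⟩ : H →g rightLayer H a)

lemma exists_leftLayer_le_deleteEdges {s : Set (Sym2 (α × β))} (hs : s.encard < ENat.card β) :
    ∃ b, leftLayer G b ≤ (G □ H).deleteEdges s :=
  exists_le_deleteEdges_of_encard_lt leftLayer_le_boxProd
    (fun _ _ hne => disjoint_left.2 fun _ _ h h' => hne (h.2.1.symm.trans h'.2.1)) hs

lemma exists_rightLayer_le_deleteEdges {s : Set (Sym2 (α × β))} (hs : s.encard < ENat.card α) :
    ∃ a, rightLayer H a ≤ (G □ H).deleteEdges s :=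
  exists_le_deleteEdges_of_encard_lt rightLayer_le_boxProd
    (fun _ _ hne => disjoint_left.2 fun _ _ h h' => hne (h.2.1.symm.trans h'.2.1)) hs

/-- The edge from `u` to a neighbor, together with the layer through that neighbor which avoids `u`.
Neighbors are indexed by the factor in which they differ from `u`; distinct neighbors have
edge-disjoint spokes, so that deleting an edge destroys at most one of them. -/
def spoke (G : SimpleGraph α) (H : SimpleGraph β) (u : α × β) :
    G.neighborSet u.1 ⊕ H.neighborSet u.2 → SimpleGraph (α × β)
  | .inl a => edge u (a.1, u.2) ⊔ rightLayer H a.1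
  | .inr b => edge u (u.1, b.1) ⊔ leftLayer G b.1

lemma spoke_le_boxProd (u : α × β) (i : G.neighborSet u.1 ⊕ H.neighborSet u.2) :
    spoke G H u i ≤ G □ H := by
  rcases i with ⟨a, ha⟩ | ⟨b, hb⟩
  · exact sup_le ((edge_le_iff _).2 (.inr (Or.inl ⟨ha, rfl⟩))) (rightLayer_le_boxProd _)
  · exact sup_le ((edge_le_iff _).2 (.inr (Or.inr ⟨hb, rfl⟩))) (leftLayer_le_boxProd _)

lemma pairwise_disjoint_spoke (u : α × β) :
    Pairwise fun i j => Disjoint (spoke G H u i) (spoke G H u j) := by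
  intro i j hne
  rw [disjoint_left]
  rcases i with ⟨a, ha⟩ | ⟨b, hb⟩ <;> rcases j with ⟨a', ha'⟩ | ⟨b', hb'⟩ <;>
    grind [spoke, leftLayer_adj, rightLayer_adj, mem_neighborSet, SimpleGraph.irrefl]

lemma reachable_of_spoke_le (hG : G.Preconnected) (hH : H.Preconnected) {K : SimpleGraph (α × β)}
    {a : α} {b : β} (ha : rightLayer H a ≤ K) (hb : leftLayer G b ≤ K) {u : α × β}
    {i : G.neighborSet u.1 ⊕ H.neighborSet u.2} (hi : spoke G H u i ≤ K) :
    K.Reachable u (a, b) := by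
  rcases i with x | y
  · obtain ⟨hedge, hlayer⟩ := sup_le_iff.1 hi
    exact ((reachable_of_edge_le hedge).trans
      ((reachable_rightLayer hH x.1 u.2 b).mono hlayer)).trans
      ((reachable_leftLayer hG x.1 a b).mono hb)
  · obtain ⟨hedge, hlayer⟩ := sup_le_iff.1 hi
    exact ((reachable_of_edge_le hedge).trans
      ((reachable_leftLayer hG u.1 a y.1).mono hlayer)).trans
      ((reachable_rightLayer hH a y.1 b).mono ha)

theorem isEdgeReachable_boxProd [G.LocallyFinite] [H.LocallyFinite] (hG : G.Preconnected)
    (hH : H.Preconnected) {k : ℕ} {u v : α × β} (hα : k ≤ ENat.card α) (hβ : k ≤ ENat.card β)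
    (hu : k ≤ (G □ H).degree u) (hv : k ≤ (G □ H).degree v) :
    (G □ H).IsEdgeReachable k u v := by
  intro s hs
  obtain ⟨a, ha⟩ := exists_rightLayer_le_deleteEdges (G := G) (H := H) (hs.trans_le hα)
  obtain ⟨b, hb⟩ := exists_leftLayer_le_deleteEdges (G := G) (H := H) (hs.trans_le hβ)
  have hreach {w : α × β} (hw : k ≤ (G □ H).degree w) :
      ((G □ H).deleteEdges s).Reachable w (a, b) := by
    have hcard : (k : ℕ∞) ≤ ENat.card (G.neighborSet w.1 ⊕ H.neighborSet w.2) := by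
      rw [degree_boxProd, ← card_neighborSet_eq_degree, ← card_neighborSet_eq_degree] at hw
      rw [ENat.card_eq_coe_fintype_card, Fintype.card_sum]
      exact_mod_cast hw
    obtain ⟨i, hi⟩ := exists_le_deleteEdges_of_encard_lt (spoke_le_boxProd w)
      (pairwise_disjoint_spoke w) (hs.trans_le hcard)
    exact reachable_of_spoke_le hG hH ha hb hi
  exact (hreach hu).trans (hreach hv).symm

/-- The path from `(a, b)` to `(a, b')` through the layer of a neighbor of `a`, or the direct edge
for `none`. -/
def detour (G : SimpleGraph α) (a : α) (b b' : β) :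
    Option (G.neighborSet a) → SimpleGraph (α × β)
  | none => edge (a, b) (a, b')
  | some x => edge (a, b) (x.1, b) ⊔ edge (x.1, b) (x.1, b') ⊔ edge (x.1, b') (a, b')

lemma detour_le_boxProd (a : α) {b b' : β} (h : H.Adj b b') (i : Option (G.neighborSet a)) :
    detour G a b b' i ≤ G □ H := by
  rcases i with _ | ⟨x, hx⟩
  · simpa [detour, edge_le_iff] using .inr h
  · have hx : G.Adj a x := hx
    simp [detour, edge_le_iff, h, hx, hx.symm, -edge_le]

lemma pairwise_disjoint_detour (a : α) {b b' : β} (h : b ≠ b') :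
    Pairwise fun i j => Disjoint (detour G a b b' i) (detour G a b b' j) := by
  intro i j hne
  rw [disjoint_left]
  rcases i with _ | ⟨x, hx⟩ <;> rcases j with _ | ⟨y, hy⟩ <;>
    grind [detour, mem_neighborSet, SimpleGraph.irrefl]

lemma reachable_of_detour_le {K : SimpleGraph (α × β)} {a : α} {b b' : β}
    {i : Option (G.neighborSet a)} (hi : detour G a b b' i ≤ K) :
    K.Reachable (a, b) (a, b') := by
  rcases i with _ | x
  · exact reachable_of_edge_le hi
  · obtain ⟨h₁₂, h₃⟩ := sup_le_iff.1 hi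
    obtain ⟨h₁, h₂⟩ := sup_le_iff.1 h₁₂
    exact ((reachable_of_edge_le h₁).trans (reachable_of_edge_le h₂)).trans
      (reachable_of_edge_le h₃)

lemma isEdgeReachable_boxProd_of_adj (a : α) [Fintype (G.neighborSet a)] {b b' : β}
    (h : H.Adj b b') : (G □ H).IsEdgeReachable (G.degree a + 1) (a, b) (a, b') := by
  intro s hs
  have hcard : ((G.degree a + 1 : ℕ) : ℕ∞) = ENat.card (Option (G.neighborSet a)) := by
    rw [ENat.card_eq_coe_fintype_card, Fintype.card_option, card_neighborSet_eq_degree]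
  obtain ⟨i, hi⟩ := exists_le_deleteEdges_of_encard_lt (detour_le_boxProd a h)
    (pairwise_disjoint_detour a h.ne) (hs.trans_eq hcard)
  exact reachable_of_detour_le hi

theorem isEdgeReachable_boxProd_of_fst_eq (hH : H.Preconnected) (a : α)
    [Fintype (G.neighborSet a)] (b b' : β) :
    (G □ H).IsEdgeReachable (G.degree a + 1) (a, b) (a, b') := by
  obtain ⟨p⟩ := hH b b'
  induction p with
  | nil => rfl
  | cons h _ ih => exact (isEdgeReachable_boxProd_of_adj a h).trans ih

end BoxProd

section Cut

variable {V : Type*} {G : SimpleGraph V} {c : Sym2 V → ℕ} {u v : V} {F : Finset (Sym2 V)}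

lemma CutsBetween.symm (h : CutsBetween G u v F) : CutsBetween G v u F :=
  ⟨h.1, fun hr => h.2 hr.symm⟩

lemma lam_comm (u v : V) : lam G u v = lam G v u := by
  have hcomm (F : Finset (Sym2 V)) : CutsBetween G u v F ↔ CutsBetween G v u F :=
    ⟨CutsBetween.symm, CutsBetween.symm⟩
  simp only [lam, hcomm]

lemma CutsBetween.le_card {k : ℕ} (hF : CutsBetween G u v F) (h : G.IsEdgeReachable k u v) :
    k ≤ F.card := by
  by_contra! hlt
  exact hF.2 (h (by simpa [Set.encard_coe_eq_coe_finsetCard] using hlt))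

lemma CutsBetween.card_eq_lam (hF : CutsBetween G u v F) (h : G.IsEdgeReachable F.card u v) :
    F.card = lam G u v := by
  refine le_antisymm (le_csInf ⟨_, F, hF, rfl⟩ ?_) (Nat.sInf_le ⟨F, hF, rfl⟩)
  rintro _ ⟨F', hF', rfl⟩
  exact hF'.le_card h

lemma cutsBetween_of_boundary_subset {S : Set V} (hF : ↑F ⊆ G.edgeSet)
    (hS : ∀ x y, x ∈ S → y ∉ S → G.Adj x y → s(x, y) ∈ F) (hu : u ∈ S) (hv : v ∉ S) :
    CutsBetween G u v F := by
  refine ⟨hF, ?_⟩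
  rintro ⟨p⟩
  obtain ⟨d, -, hfst, hsnd⟩ := p.exists_boundary_dart S hu hv
  obtain ⟨hadj, hnot⟩ := deleteEdges_adj.1 d.adj
  exact hnot (hS _ _ hfst hsnd hadj)

lemma cutsBetween_incidenceFinset [DecidableEq V] [Fintype (G.neighborSet u)] (h : u ≠ v) :
    CutsBetween G u v (G.incidenceFinset u) := by
  refine cutsBetween_of_boundary_subset (S := {u}) (by simpa using G.incidenceSet_subset u) ?_ rfl
    h.symm
  rintro x y rfl - hxy
  simpa [mk'_mem_incidenceSet_left_iff] using hxy

/-- The vertices `u` and `v` have a rainbow minimum edge-cut under the coloring `c`; this is the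
condition that `IsSRDColoring` imposes on a single pair. -/
def HasRainbowMinCut (G : SimpleGraph V) (c : Sym2 V → ℕ) (u v : V) : Prop :=
  ∃ F : Finset (Sym2 V), CutsBetween G u v F ∧ F.card = lam G u v ∧ Set.InjOn c ↑F

lemma HasRainbowMinCut.symm (h : HasRainbowMinCut G c u v) : HasRainbowMinCut G c v u := by
  obtain ⟨F, hF, hcard, hc⟩ := h
  exact ⟨F, hF.symm, hcard.trans (lam_comm u v), hc⟩

lemma CutsBetween.hasRainbowMinCut (hF : CutsBetween G u v F) (h : G.IsEdgeReachable F.card u v)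
    (hc : Set.InjOn c ↑F) : HasRainbowMinCut G c u v :=
  ⟨F, hF, hF.card_eq_lam h, hc⟩

lemma hasRainbowMinCut_of_injOn_incidenceSet [Fintype (G.neighborSet u)] (huv : u ≠ v)
    (h : G.IsEdgeReachable (G.degree u) u v) (hc : Set.InjOn c (G.incidenceSet u)) :
    HasRainbowMinCut G c u v := by
  classical
  refine (cutsBetween_incidenceFinset huv).hasRainbowMinCut ?_ ?_
  · rwa [card_incidenceFinset_eq_degree]
  · rwa [coe_incidenceFinset]

lemma IsSRDColoring.le_of_isEdgeReachable {k m : ℕ} (hc : IsSRDColoring G c)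
    (hm : ∀ e ∈ G.edgeSet, c e < m) (huv : u ≠ v) (h : G.IsEdgeReachable k u v) : k ≤ m := by
  obtain ⟨F, hF, -, hinj⟩ := hc u v huv
  calc k ≤ F.card := hF.le_card h
    _ ≤ (Finset.range m).card :=
        Finset.card_le_card_of_injOn c (fun e he => by simpa using hm e (hF.1 he)) hinj
    _ = m := Finset.card_range m

theorem IsSRDColoring.srd_eq {k : ℕ} (hc : IsSRDColoring G c) (hk : ∀ e ∈ G.edgeSet, c e < k)
    (huv : u ≠ v) (h : G.IsEdgeReachable k u v) : srd G = k := by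
  refine le_antisymm (Nat.sInf_le ⟨c, hk, hc⟩) (le_csInf ⟨k, c, hk, hc⟩ ?_)
  rintro m ⟨c', hm, hc'⟩
  exact hc'.le_of_isEdgeReachable hm huv h

end Cut

section Rungs

variable {α β : Type*} [Fintype α] [DecidableEq α] [DecidableEq β]

/-- The pairs joining corresponding vertices of the layers `α × {b}` and `α × {b'}` of a Cartesian
product; for consecutive `b` and `b'` they are the edges of the grid between two columns. -/
def rungs (α : Type*) [Fintype α] [DecidableEq α] (b b' : β) : Finset (Sym2 (α × β)) :=
  Finset.univ.image fun a => s((a, b), (a, b'))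

lemma mem_rungs {b b' : β} {e : Sym2 (α × β)} :
    e ∈ rungs α b b' ↔ ∃ a, s((a, b), (a, b')) = e := by
  simp [rungs]

lemma card_rungs_le (b b' : β) : (rungs α b b').card ≤ Fintype.card α :=
  Finset.card_image_le

end Rungs

lemma cutsBetween_rungs {α β : Type*} [Fintype α] [DecidableEq α] [LinearOrder β]
    {G : SimpleGraph α} {b b' : β} (h : b ⋖ b') {u v : α × β} (hu : u.2 ≤ b) (hv : b < v.2) :
    CutsBetween (G □ hasse β) u v (rungs α b b') := by
  refine cutsBetween_of_boundary_subset (S := {x | x.2 ≤ b}) ?_ ?_ hu hv.not_ge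
  · intro e he
    obtain ⟨a, rfl⟩ := mem_rungs.1 he
    exact Or.inr ⟨Or.inl h, rfl⟩
  · rintro ⟨a, x⟩ ⟨a', y⟩ hx hy hxy
    simp only [Set.mem_ofPred_eq, not_le] at hx hy
    rcases hxy with ⟨-, rfl⟩ | ⟨hxy | hyx, rfl⟩
    · exact absurd hx hy.not_ge
    · obtain rfl : x = b := hx.eq_of_not_lt fun hlt => hxy.2 hlt hy
      obtain rfl : y = b' := CovBy.unique_right hxy h
      exact mem_rungs.2 ⟨a, rfl⟩
    · exact absurd (hyx.lt.trans_le hx) hy.not_gt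

section Grid

variable {n : ℕ}

instance decidableRelPathGraphAdj (n : ℕ) : DecidableRel (pathGraph n).Adj :=
  fun _ _ => decidable_of_iff' _ pathGraph_adj

lemma degree_pathGraph_le_two (j : Fin n) : (pathGraph n).degree j ≤ 2 := by
  rw [← card_neighborFinset_eq_degree, ← Finset.card_map Fin.valEmbedding]
  have hsub : (((pathGraph n).neighborFinset j).map Fin.valEmbedding) ⊆ {j.val - 1, j.val + 1} := by
    intro k hk
    simp only [Finset.mem_map, mem_neighborFinset, pathGraph_adj, Fin.valEmbedding_apply] at hk
    obtain ⟨k, hjk, rfl⟩ := hk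
    simp only [Finset.mem_insert, Finset.mem_singleton]
    omega
  exact (Finset.card_le_card hsub).trans Finset.card_le_two

lemma degree_pathGraph_three (i : Fin 3) : (pathGraph 3).degree i = if i = 1 then 2 else 1 := by
  decide +revert

lemma degree_pathGraph_pos (hn : 2 ≤ n) (j : Fin n) : 0 < (pathGraph n).degree j := by
  have : Nontrivial (Fin n) := Fin.nontrivial_iff_two_le.2 hn
  exact (pathGraph_preconnected n).degree_pos_of_nontrivial j

/-- The coloring of the edges of the `3 × n` grid that sends the edge between `(i, j)` and
`(i', j')` to `min (i * i') 2 + j + j'` modulo `3`. The first summand is `i` on an edge within row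
`i`, and it is the index of the outer row on a vertical edge. Hence the three edges between
consecutive columns get different colors, and so do the edges at a vertex `(i, j)` of an outer row,
where the color is `i + j + j'` modulo `3` and `j' - j` is `0`, `-1` or `1`. -/
def gridColoring (n : ℕ) : Sym2 (Fin 3 × Fin n) → ℕ :=
  Sym2.lift ⟨fun x y => (min (x.1.val * y.1.val) 2 + x.2.val + y.2.val) % 3, fun x y => by
    simp only [mul_comm x.1.val, add_right_comm]⟩

lemma gridColoring_mk (x y : Fin 3 × Fin n) :
    gridColoring n s(x, y) = (min (x.1.val * y.1.val) 2 + x.2.val + y.2.val) % 3 := rfl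

lemma gridColoring_lt (e : Sym2 (Fin 3 × Fin n)) : gridColoring n e < 3 := by
  induction e with
  | _ x y => exact Nat.mod_lt _ (by norm_num)

lemma gridColoring_mk_of_fst_eq (i : Fin 3) (j k : Fin n) :
    gridColoring n s((i, j), (i, k)) = (i.val + j.val + k.val) % 3 := by
  have hrow : min (i.val * i.val) 2 = i.val := by decide +revert
  rw [gridColoring_mk, hrow]

lemma gridColoring_mk_of_adj {u v : Fin 3 × Fin n} (hu : u.1 ≠ 1)
    (h : (pathGraph 3 □ pathGraph n).Adj u v) :
    gridColoring n s(u, v) = (u.1.val + u.2.val + v.2.val) % 3 := by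
  have hmin : ∀ i i' : Fin 3, i ≠ 1 → (pathGraph 3).Adj i i' → min (i.val * i'.val) 2 = i.val := by
    decide
  obtain ⟨i, j⟩ := u
  obtain ⟨i', k⟩ := v
  rcases h with ⟨h, -⟩ | ⟨-, rfl⟩
  · rw [gridColoring_mk, hmin i i' hu h]
  · exact gridColoring_mk_of_fst_eq i j k

lemma injOn_gridColoring_rungs (j k : Fin n) :
    Set.InjOn (gridColoring n) (rungs (Fin 3) j k) := by
  intro e he f hf hef
  obtain ⟨a, rfl⟩ := mem_rungs.1 he
  obtain ⟨b, rfl⟩ := mem_rungs.1 hf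
  rw [gridColoring_mk_of_fst_eq, gridColoring_mk_of_fst_eq] at hef
  obtain rfl : a = b := Fin.ext (by omega)
  rfl

lemma injOn_gridColoring_incidenceSet {u : Fin 3 × Fin n} (hu : u.1 ≠ 1) :
    Set.InjOn (gridColoring n) ((pathGraph 3 □ pathGraph n).incidenceSet u) := by
  rintro e ⟨he, hue⟩ f ⟨hf, huf⟩ hef
  obtain ⟨v, rfl⟩ := Sym2.mem_iff_exists.1 hue
  obtain ⟨w, rfl⟩ := Sym2.mem_iff_exists.1 huf
  rw [mem_edgeSet] at he hf
  rw [gridColoring_mk_of_adj hu he, gridColoring_mk_of_adj hu hf] at hef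
  simp only [boxProd_adj, pathGraph_adj, Fin.ext_iff] at he hf
  have hrow : u.1.val ≠ 1 := fun h => hu (Fin.ext h)
  have hcol : v.2.val = w.2.val := by omega
  obtain rfl : v = w := Prod.ext (Fin.ext (by omega)) (Fin.ext hcol)
  rfl

theorem isEdgeReachable_grid_middle_row (j k : Fin n) :
    (pathGraph 3 □ pathGraph n).IsEdgeReachable 3 (1, j) (1, k) := by
  simpa [degree_pathGraph_three] using
    isEdgeReachable_boxProd_of_fst_eq (G := pathGraph 3) (pathGraph_preconnected n) 1 j k

lemma isEdgeReachable_grid_degree {u v : Fin 3 × Fin n} (hu : u.1 ≠ 1)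
    (h : (pathGraph 3 □ pathGraph n).degree u ≤ (pathGraph 3 □ pathGraph n).degree v) :
    (pathGraph 3 □ pathGraph n).IsEdgeReachable ((pathGraph 3 □ pathGraph n).degree u) u v := by
  have hdeg : (pathGraph 3 □ pathGraph n).degree u = 1 + (pathGraph n).degree u.2 := by
    rw [degree_boxProd, degree_pathGraph_three, if_neg hu]
  have hle := degree_pathGraph_le_two u.2
  have hlt : (pathGraph n).degree u.2 < n := by simpa using (pathGraph n).degree_lt_card_verts u.2
  refine isEdgeReachable_boxProd (pathGraph_preconnected 3) (pathGraph_preconnected n) ?_ ?_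
    le_rfl h
  · rw [hdeg, ENat.card_eq_coe_fintype_card, Fintype.card_fin]
    exact_mod_cast (by omega)
  · rw [hdeg, ENat.card_eq_coe_fintype_card, Fintype.card_fin]
    exact_mod_cast (by omega)

lemma hasRainbowMinCut_grid_of_degree_le {u v : Fin 3 × Fin n} (huv : u ≠ v) (hu : u.1 ≠ 1)
    (h : (pathGraph 3 □ pathGraph n).degree u ≤ (pathGraph 3 □ pathGraph n).degree v) :
    HasRainbowMinCut (pathGraph 3 □ pathGraph n) (gridColoring n) u v :=
  hasRainbowMinCut_of_injOn_incidenceSet huv (isEdgeReachable_grid_degree hu h)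
    (injOn_gridColoring_incidenceSet hu)

lemma hasRainbowMinCut_grid_middle_row {j k : Fin n} (h : j < k) :
    HasRainbowMinCut (pathGraph 3 □ pathGraph n) (gridColoring n) (1, j) (1, k) := by
  have hcov : j ⋖ Order.succ j := Order.covBy_succ_of_not_isMax h.not_isMax
  exact (cutsBetween_rungs hcov le_rfl h).hasRainbowMinCut
    ((isEdgeReachable_grid_middle_row j k).anti (card_rungs_le _ _))
    (injOn_gridColoring_rungs _ _)

lemma degree_grid_le_degree_middle_row (hn : 2 ≤ n) {u v : Fin 3 × Fin n} (hu : u.1 ≠ 1)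
    (hv : v.1 = 1) :
    (pathGraph 3 □ pathGraph n).degree u ≤ (pathGraph 3 □ pathGraph n).degree v := by
  have := degree_pathGraph_le_two u.2
  have := degree_pathGraph_pos hn v.2
  rw [degree_boxProd, degree_boxProd, degree_pathGraph_three, degree_pathGraph_three, if_neg hu,
    if_pos hv]
  omega

theorem isSRDColoring_gridColoring (hn : 2 ≤ n) :
    IsSRDColoring (pathGraph 3 □ pathGraph n) (gridColoring n) := by
  intro u v huv
  change HasRainbowMinCut _ _ u v
  by_cases hu : u.1 = 1 <;> by_cases hv : v.1 = 1
  · obtain ⟨i, j⟩ := u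
    obtain ⟨i', k⟩ := v
    obtain rfl : i = 1 := hu
    obtain rfl : i' = 1 := hv
    rcases lt_or_gt_of_ne (show j ≠ k by simpa using huv) with h | h
    · exact hasRainbowMinCut_grid_middle_row h
    · exact (hasRainbowMinCut_grid_middle_row h).symm
  · exact (hasRainbowMinCut_grid_of_degree_le huv.symm hv
      (degree_grid_le_degree_middle_row hn hv hu)).symm
  · exact hasRainbowMinCut_grid_of_degree_le huv hu (degree_grid_le_degree_middle_row hn hu hv)
  · rcases le_total ((pathGraph 3 □ pathGraph n).degree u)
      ((pathGraph 3 □ pathGraph n).degree v) with h | h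
    · exact hasRainbowMinCut_grid_of_degree_le huv hu h
    · exact (hasRainbowMinCut_grid_of_degree_le huv.symm hv h).symm

end Grid

theorem stmt12_general (n : ℕ) (hn : 2 ≤ n) : srd (pathGraph 3 □ pathGraph n) = 3 := by
  have h₀ : 0 < n := by omega
  have h₁ : 1 < n := by omega
  exact (isSRDColoring_gridColoring hn).srd_eq (fun e _ => gridColoring_lt e)
    (u := (1, ⟨0, h₀⟩)) (v := (1, ⟨1, h₁⟩)) (by simp) (isEdgeReachable_grid_middle_row _ _)

theorem stmt12 (n : ℕ) (hn : 4 ≤ n) :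
    srd (SimpleGraph.pathGraph 3 □ SimpleGraph.pathGraph n) = 3 :=
  stmt12_general n (by omega)
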